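/- For every integer r ≥ 1 there exists a finite solvable group of derived length exactly 5r whose composition length equals 7(9^r − 1)/8. In particular, for every d that is a multiple of 5, the minimal composition length of a finite solvable group of derived length d is less than (7/8)·9^{d/5}. -/

import Mathlib

/-!
The group of derived length `5r` is an iterated wreath product. Let `H = AGL₂(3) = 𝔽₃² ⋊ GL₂(3)`, of
order `432 = 2⁴ · 3³`, acting on the nine cosets of `GL₂(3)`, and replace a group `G` by the
wreath product `W = G⁹ ⋊ H`. Then `Ω(|W|) = 9 Ω(|G|) + 7`, which gives `7(9^r - 1)/8` by induction,
and it remains to see that the derived length grows by exactly `5`.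

* `H` has derived length `5`: the derived series of `GL₂(3)` descends through `SL₂(3)`, `Q₈` and
  `{±1}` to `1`, so `H⁽⁴⁾` lies in the translation group, which is abelian. Conversely `-1` lies in
  `GL₂(3)⁽³⁾`, and `[-1, v] = -2v = v`, so by induction every translation lies in `H⁽⁴⁾`.
* Upper bound: `W⁽⁵⁾` lies in the base group `G⁹`, so `W⁽⁵⁺ᵏ⁾` lies in `(G⁽ᵏ⁾)⁹`.
* Lower bound: let `σ ∈ H⁽⁴⁾` be a nontrivial translation and `p` a point, so that `p`, `σ p`, `σ² p`
  are distinct. If `b ∈ G⁹` is `g` at `p` and trivial elsewhere, then `[σ, b] ∈ W⁽⁴⁾`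
  because this subgroup is normal, hence `[σ, [σ, b]] ∈ W⁽⁵⁾`; this element of `G⁹` has `p`-coordinate
  `g`. Thus `W⁽⁵⁾ ∩ G⁹` surjects onto `G`, and `W⁽⁵⁺ᵏ⁾ ∩ G⁹` maps onto a subgroup containing `G⁽ᵏ⁾`.
-/

/-- `SolvableGroupData G d n` says that `G` is a finite solvable group of derived
length exactly `d` and composition length (= Ω of its order) equal to `n`. -/
def SolvableGroupData (G : Type*) [Group G] (d n : ℕ) : Prop :=
  Finite G ∧ IsSolvable G ∧ derivedSeries G d = ⊥ ∧ derivedSeries G (d - 1) ≠ ⊥ ∧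
    (Nat.card G).primeFactorsList.length = n

open Matrix
open scoped commutatorElement

/-! ### Derived series and homomorphisms -/

theorem derivedSeries_add_le_map {A B : Type*} [Group A] [Group B] (f : A →* B) (m : ℕ)
    (h : derivedSeries B m ≤ f.range) (k : ℕ) :
    derivedSeries B (m + k) ≤ (derivedSeries A k).map f := by
  induction k with
  | zero => rwa [derivedSeries_zero, ← MonoidHom.range_eq_map]
  | succ k ih =>
    rw [← add_assoc, derivedSeries_succ, derivedSeries_succ, Subgroup.map_commutator]
    exact Subgroup.commutator_mono ih ih

theorem derivedSeries_pi_eq_bot {ι G : Type*} [Group G] {k : ℕ} (h : derivedSeries G k = ⊥) :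
    derivedSeries (ι → G) k = ⊥ := by
  rw [eq_bot_iff]
  intro x hx
  rw [Subgroup.mem_bot]
  funext i
  have := map_derivedSeries_le_derivedSeries (Pi.evalMonoidHom (fun _ : ι => G) i) k
    (Subgroup.mem_map_of_mem _ hx)
  rwa [h, Subgroup.mem_bot] at this

/-- If `e` maps the preimage of `D⁽ᵐ⁾` in `A` onto `G`, then it maps the preimage of `D⁽ᵐ⁺ᵏ⁾` onto
a subgroup containing `G⁽ᵏ⁾`. -/
theorem derivedSeries_le_map_comap {A D G : Type*} [Group A] [Group D] [Group G] (i : A →* D)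
    (e : A →* G) (m : ℕ) (h : ((derivedSeries D m).comap i).map e = ⊤) (k : ℕ) :
    derivedSeries G k ≤ ((derivedSeries D (m + k)).comap i).map e := by
  induction k with
  | zero => rw [add_zero, h]; exact le_top
  | succ k ih =>
    rw [← add_assoc, derivedSeries_succ, derivedSeries_succ]
    refine (Subgroup.commutator_mono ih ih).trans ?_
    rw [← Subgroup.map_commutator]
    refine Subgroup.map_mono (Subgroup.map_le_iff_le_comap.1 ?_)
    rw [Subgroup.map_commutator]
    exact Subgroup.commutator_mono (Subgroup.map_comap_le _ _) (Subgroup.map_comap_le _ _)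

theorem derivedSeries_semidirect_le {N H : Type*} [Group N] [Group H] (φ : H →* MulAut N) {m : ℕ}
    (h : derivedSeries H m = ⊥) :
    derivedSeries (N ⋊[φ] H) m ≤ (SemidirectProduct.inl : N →* N ⋊[φ] H).range := by
  rw [SemidirectProduct.range_inl_eq_ker_rightHom]
  intro x hx
  have := map_derivedSeries_le_derivedSeries (SemidirectProduct.rightHom : N ⋊[φ] H →* H) m
    (Subgroup.mem_map_of_mem _ hx)
  rwa [h, Subgroup.mem_bot] at this

theorem SemidirectProduct.commutator_inr_inl {N H : Type*} [Group N] [Group H]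
    (φ : H →* MulAut N) (h : H) (n : N) :
    ⁅(SemidirectProduct.inr h : N ⋊[φ] H), (SemidirectProduct.inl n : N ⋊[φ] H)⁆
      = SemidirectProduct.inl (φ h n * n⁻¹) := by
  rw [commutatorElement_def, map_mul, SemidirectProduct.inl_aut, map_inv, map_inv]

/-! ### The wreath product -/

/-- The wreath product of `G` with a group `H` acting on `X`. -/
abbrev Wreath (G H X : Type*) [Group G] [Group H] [MulAction H X] : Type _ :=
  (X → G) ⋊[(mulAutArrow : H →* MulAut (X → G))] H

theorem wreath_derivedSeries_eq_bot (G H X : Type*) [Group G] [Group H] [MulAction H X]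
    {d m : ℕ} (hG : derivedSeries G d = ⊥) (hH : derivedSeries H m = ⊥) :
    derivedSeries (Wreath G H X) (m + d) = ⊥ := by
  have := derivedSeries_add_le_map _ m
    (derivedSeries_semidirect_le (mulAutArrow : H →* MulAut (X → G)) hH) d
  rwa [derivedSeries_pi_eq_bot hG, Subgroup.map_bot, le_bot_iff] at this

open Classical in
/-- The `p`-coordinate of `W⁽ᵐ⁺¹⁾ ∩ (X → G)` is arbitrary as soon as some `σ ∈ H⁽ᵐ⁾` satisfies `σ p ≠ p`
and `σ² p ≠ p`: the double commutator of `σ` with `g` placed at `p` has `p`-coordinate `g`. -/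
theorem wreath_map_eval_eq_top (G H X : Type*) [Group G] [Group H] [MulAction H X]
    {m : ℕ} {σ : H} (hσ : σ ∈ derivedSeries H m) {p : X} (h1 : σ • p ≠ p) (h2 : σ • σ • p ≠ p) :
    ((derivedSeries (Wreath G H X) (m + 1)).comap SemidirectProduct.inl).map
      (Pi.evalMonoidHom (fun _ : X => G) p) = ⊤ := by
  rw [eq_top_iff]
  intro g _
  have hs : (SemidirectProduct.inr σ : Wreath G H X) ∈ derivedSeries (Wreath G H X) m :=
    map_derivedSeries_le_derivedSeries _ m (Subgroup.mem_map_of_mem _ hσ)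
  set φ : H →* MulAut (X → G) := mulAutArrow with hφ
  set b : X → G := Pi.mulSingle p g with hb
  have hx : (SemidirectProduct.inl (φ σ b * b⁻¹) : Wreath G H X) ∈
      derivedSeries (Wreath G H X) m := by
    rw [← SemidirectProduct.commutator_inr_inl]
    have := derivedSeries_normal (Wreath G H X) m
    exact Subgroup.commutator_le_left _ ⊤
      (Subgroup.commutator_mem_commutator hs (Subgroup.mem_top _))
  refine ⟨φ σ (φ σ b * b⁻¹) * (φ σ b * b⁻¹)⁻¹, ?_, ?_⟩
  · show SemidirectProduct.inl _ ∈ derivedSeries (Wreath G H X) (m + 1)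
    rw [← SemidirectProduct.commutator_inr_inl, derivedSeries_succ]
    exact Subgroup.commutator_mem_commutator hs hx
  · have e : ∀ (f : X → G) (x : X), φ σ f x = f (σ⁻¹ • x) := fun f x => rfl
    have n1 : σ⁻¹ • p ≠ p := fun h => h1 (by rw [eq_comm, ← inv_smul_eq_iff]; exact h)
    have n2 : σ⁻¹ • σ⁻¹ • p ≠ p := fun h => h2 (by
      rw [eq_comm, ← inv_smul_eq_iff, ← inv_smul_eq_iff]; exact h)
    simp [e, hb, n1, n2]

theorem wreath_derivedSeries_ne_bot (G H X : Type*) [Group G] [Group H] [MulAction H X]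
    {m k : ℕ} {σ : H} (hσ : σ ∈ derivedSeries H m) {p : X} (h1 : σ • p ≠ p)
    (h2 : σ • σ • p ≠ p) (hG : derivedSeries G k ≠ ⊥) :
    derivedSeries (Wreath G H X) (m + 1 + k) ≠ ⊥ := by
  intro h
  have := derivedSeries_le_map_comap _ _ _ (wreath_map_eval_eq_top G H X hσ h1 h2) k
  rw [h, MonoidHom.comap_bot, (MonoidHom.ker_eq_bot_iff _).2 SemidirectProduct.inl_injective,
    Subgroup.map_bot, le_bot_iff] at this
  exact hG this

theorem wreath_data (G H X : Type*) [Group G] [Group H] [MulAction H X] [Finite X]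
    {d n m l : ℕ} (hd : 1 ≤ d) (hG : SolvableGroupData G d n) (hH : SolvableGroupData H (m + 1) l)
    {σ : H} (hσ : σ ∈ derivedSeries H m) {p : X} (h1 : σ • p ≠ p) (h2 : σ • σ • p ≠ p) :
    SolvableGroupData (Wreath G H X) (d + (m + 1)) (Nat.card X * n + l) := by
  obtain ⟨fG, -, dG, nG, cG⟩ := hG
  obtain ⟨fH, -, dH, -, cH⟩ := hH
  have hb : derivedSeries (Wreath G H X) (d + (m + 1)) = ⊥ := by
    rw [add_comm]
    exact wreath_derivedSeries_eq_bot G H X dG dH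
  refine ⟨Finite.of_equiv _ SemidirectProduct.equivProd.symm, ⟨_, hb⟩, hb, ?_, ?_⟩
  · rw [show d + (m + 1) - 1 = m + 1 + (d - 1) by omega]
    exact wreath_derivedSeries_ne_bot G H X hσ h1 h2 nG
  · rw [← ArithmeticFunction.cardFactors_apply] at cG cH ⊢
    rw [SemidirectProduct.card, Nat.card_fun,
      ArithmeticFunction.cardFactors_mul (pow_ne_zero _ Nat.card_pos.ne') Nat.card_pos.ne',
      ArithmeticFunction.cardFactors_pow, cG, cH]

/-! ### The derived series of `GL₂(3)` -/

/-- The general linear group `GL₂(3)`. -/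
abbrev GL23 : Type := GL (Fin 2) (ZMod 3)

/-- A `2 × 2` matrix that is diagonal or has trace zero. Among the matrices in `SL₂(3)` these are
exactly the eight elements of the quaternion subgroup: a diagonal one is `±1`, one of trace zero
squares to `-1`. -/
def QuatLike (M : Matrix (Fin 2) (Fin 2) (ZMod 3)) : Prop :=
  M 0 0 + M 1 1 = 0 ∨ M 0 1 = 0 ∧ M 1 0 = 0

instance (M : Matrix (Fin 2) (Fin 2) (ZMod 3)) : Decidable (QuatLike M) := by
  unfold QuatLike; infer_instance

theorem quatLike_mul_entries : ∀ a b c d : ZMod 3, a * d - b * c = 1 →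
    QuatLike !![a, b; c, d] → ∀ e f g h : ZMod 3, e * h - f * g = 1 →
    QuatLike !![e, f; g, h] → QuatLike (!![a, b; c, d] * !![e, f; g, h]) := by
  decide +kernel

theorem quatLike_commutator_entries : ∀ a b c d : ZMod 3, a * d - b * c = 1 →
    ∀ e f g h : ZMod 3, e * h - f * g = 1 →
    QuatLike (!![a, b; c, d] * !![e, f; g, h] * (!![d, -b; -c, a] * !![h, -f; -g, e])) := by
  decide +kernel

theorem quat_commutator_entries : ∀ a b c d : ZMod 3, a * d - b * c = 1 →
    QuatLike !![a, b; c, d] → ∀ e f g h : ZMod 3, e * h - f * g = 1 →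
    QuatLike !![e, f; g, h] →
    !![a, b; c, d] * !![e, f; g, h] * (!![d, -b; -c, a] * !![h, -f; -g, e]) = 1 ∨
    !![a, b; c, d] * !![e, f; g, h] * (!![d, -b; -c, a] * !![h, -f; -g, e]) = -1 := by
  decide +kernel

theorem GL23.coe_inv_eq {A : GL23} (h : (A : Matrix (Fin 2) (Fin 2) (ZMod 3)).det = 1) :
    ((A⁻¹ : GL23) : Matrix (Fin 2) (Fin 2) (ZMod 3)) = !![A 1 1, -A 0 1; -A 1 0, A 0 0] := by
  rw [Matrix.coe_units_inv, Matrix.inv_def, h, Ring.inverse_one, one_smul, adjugate_fin_two]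

theorem GL23.coe_commutator_eq {A B : GL23}
    (hA : (A : Matrix (Fin 2) (Fin 2) (ZMod 3)).det = 1)
    (hB : (B : Matrix (Fin 2) (Fin 2) (ZMod 3)).det = 1) :
    ((⁅A, B⁆ : GL23) : Matrix (Fin 2) (Fin 2) (ZMod 3)) =
      !![A 0 0, A 0 1; A 1 0, A 1 1] * !![B 0 0, B 0 1; B 1 0, B 1 1] *
      (!![A 1 1, -A 0 1; -A 1 0, A 0 0] * !![B 1 1, -B 0 1; -B 1 0, B 0 0]) := by
  rw [commutatorElement_def, mul_assoc, Units.val_mul, Units.val_mul, Units.val_mul,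
    GL23.coe_inv_eq hA, GL23.coe_inv_eq hB, ← eta_fin_two, ← eta_fin_two]

/-- The quaternion subgroup `Q₈` of `GL₂(3)`. -/
def quatSubgroup : Subgroup GL23 where
  carrier := {A | (A : Matrix (Fin 2) (Fin 2) (ZMod 3)).det = 1 ∧ QuatLike A}
  one_mem' := by
    refine ⟨by simp, ?_⟩
    rw [Units.val_one]; decide
  mul_mem' := by
    rintro A B ⟨hA, qA⟩ ⟨hB, qB⟩
    refine ⟨by rw [Units.val_mul, det_mul, hA, hB, one_mul], ?_⟩
    rw [det_fin_two] at hA hB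
    have := quatLike_mul_entries _ _ _ _ hA qA _ _ _ _ hB qB
    rwa [← eta_fin_two, ← eta_fin_two, ← Units.val_mul] at this
  inv_mem' := by
    rintro A ⟨hA, qA⟩
    refine ⟨by rw [Matrix.coe_units_inv, det_nonsing_inv, hA, Ring.inverse_one], ?_⟩
    rw [GL23.coe_inv_eq hA]
    rcases qA with h | ⟨h, h'⟩
    · left
      simpa [add_comm] using h
    · right
      simp [h, h']

theorem det_eq_one_of_mem_derivedSeries {A : GL23} (hA : A ∈ derivedSeries GL23 1) :
    (A : Matrix (Fin 2) (Fin 2) (ZMod 3)).det = 1 := by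
  rw [derivedSeries_one] at hA
  have h := Abelianization.commutator_subset_ker (GeneralLinearGroup.det (n := Fin 2)
    (R := ZMod 3)) hA
  simpa using congrArg Units.val (MonoidHom.mem_ker.1 h)

theorem derivedSeries_two_le : derivedSeries GL23 2 ≤ quatSubgroup := by
  rw [derivedSeries_succ, Subgroup.commutator_le]
  intro A hA B hB
  have hA := det_eq_one_of_mem_derivedSeries hA
  have hB := det_eq_one_of_mem_derivedSeries hB
  refine ⟨?_, ?_⟩
  · rw [commutatorElement_def]
    simp [hA, hB]
  · rw [GL23.coe_commutator_eq hA hB]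
    rw [det_fin_two] at hA hB
    exact quatLike_commutator_entries _ _ _ _ hA _ _ _ _ hB

theorem derivedSeries_three_le : derivedSeries GL23 3 ≤ Subgroup.center GL23 := by
  rw [derivedSeries_succ, Subgroup.commutator_le]
  intro A hA B hB
  obtain ⟨hA, qA⟩ := derivedSeries_two_le hA
  obtain ⟨hB, qB⟩ := derivedSeries_two_le hB
  have key := GL23.coe_commutator_eq hA hB
  rw [det_fin_two] at hA hB
  rw [Subgroup.mem_center_iff]
  intro g
  apply Units.ext
  rw [Units.val_mul, Units.val_mul]
  rcases quat_commutator_entries _ _ _ _ hA qA _ _ _ _ hB qB with h | h <;>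
  · rw [key, h]
    simp

theorem derivedSeries_four_eq : derivedSeries GL23 4 = ⊥ := by
  rw [derivedSeries_succ, eq_bot_iff, Subgroup.commutator_le]
  intro A hA B _
  rw [Subgroup.mem_bot, commutatorElement_eq_one_iff_mul_comm]
  exact (Subgroup.mem_center_iff.1 (derivedSeries_three_le hA) B).symm

theorem neg_one_mem_derivedSeries : (-1 : GL23) ∈ derivedSeries GL23 3 := by
  let D : GL23 := ⟨!![1, 0; 0, -1], !![1, 0; 0, -1], by decide, by decide⟩
  let u : GL23 := ⟨!![1, 1; 0, 1], !![1, -1; 0, 1], by decide, by decide⟩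
  let l : GL23 := ⟨!![1, 0; 1, 1], !![1, 0; -1, 1], by decide, by decide⟩
  have hu : u ∈ derivedSeries GL23 1 := by
    rw [show u = ⁅D, u⁆ from Units.ext (by decide), derivedSeries_succ]
    exact Subgroup.commutator_mem_commutator (Subgroup.mem_top _) (Subgroup.mem_top _)
  have hl : l ∈ derivedSeries GL23 1 := by
    rw [show l = ⁅D, l⁆ from Units.ext (by decide), derivedSeries_succ]
    exact Subgroup.commutator_mem_commutator (Subgroup.mem_top _) (Subgroup.mem_top _)
  -- the commutators `[u, l]` and `[u, l⁻¹]` are two anticommuting elements of `Q₈`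
  have hi : ⁅u, l⁆ ∈ derivedSeries GL23 2 := by
    rw [derivedSeries_succ]
    exact Subgroup.commutator_mem_commutator hu hl
  have hj : ⁅u, l⁻¹⁆ ∈ derivedSeries GL23 2 := by
    rw [derivedSeries_succ]
    exact Subgroup.commutator_mem_commutator hu (inv_mem hl)
  rw [show (-1 : GL23) = ⁅⁅u, l⁆, ⁅u, l⁻¹⁆⁆ from Units.ext (by decide), derivedSeries_succ]
  exact Subgroup.commutator_mem_commutator hi hj

/-! ### The affine group `AGL₂(3)` -/

/-- The translation group `𝔽₃²`, written multiplicatively. -/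
abbrev TransGrp : Type := Multiplicative (Fin 2 → ZMod 3)

/-- The natural action of `GL₂(3)` on the translation group. -/
def linAct : GL23 →* MulAut TransGrp where
  toFun A :=
    { toFun := fun v => .ofAdd ((A : Matrix (Fin 2) (Fin 2) (ZMod 3)) *ᵥ v.toAdd)
      invFun := fun v => .ofAdd (((A⁻¹ : GL23) : Matrix (Fin 2) (Fin 2) (ZMod 3)) *ᵥ v.toAdd)
      left_inv := fun v => by
        simp only [toAdd_ofAdd, mulVec_mulVec, ← Units.val_mul, inv_mul_cancel, Units.val_one,
          one_mulVec, ofAdd_toAdd]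
      right_inv := fun v => by
        simp only [toAdd_ofAdd, mulVec_mulVec, ← Units.val_mul, mul_inv_cancel, Units.val_one,
          one_mulVec, ofAdd_toAdd]
      map_mul' := fun v w => by
        rw [toAdd_mul, mulVec_add, ofAdd_add] }
  map_one' := by
    ext1 v
    show Multiplicative.ofAdd _ = v
    rw [Units.val_one, one_mulVec]
    rfl
  map_mul' A B := by
    ext1 v
    show Multiplicative.ofAdd _ = Multiplicative.ofAdd _
    rw [Units.val_mul, ← mulVec_mulVec]
    rfl

/-- The affine group `AGL₂(3) = 𝔽₃² ⋊ GL₂(3)`. -/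
abbrev AGL23 : Type := TransGrp ⋊[linAct] GL23

/-- The point stabiliser `GL₂(3)` in `AGL₂(3)`. -/
abbrev AGL23.stab : Subgroup AGL23 := (SemidirectProduct.inr : GL23 →* AGL23).range

theorem card_GL23 : Nat.card GL23 = 48 := by
  have : Fact (Nat.Prime 3) := ⟨Nat.prime_three⟩
  rw [Matrix.card_GL_field]
  simp [Fin.prod_univ_two]

theorem card_TransGrp : Nat.card TransGrp = 9 := by
  rw [Nat.card_eq_fintype_card]
  simp

theorem card_AGL23_quotient : Nat.card (AGL23 ⧸ AGL23.stab) = 9 := by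
  have h := AGL23.stab.card_mul_index
  rw [SemidirectProduct.card, card_TransGrp, card_GL23,
    ← Nat.card_congr (MonoidHom.ofInjective
      (SemidirectProduct.inr_injective (φ := linAct))).toEquiv, card_GL23] at h
  change AGL23.stab.index = 9
  omega

/-- Every translation `v` is the commutator `[-1, v] = -2v = v`. -/
theorem translation_mem_derivedSeries (v : TransGrp) :
    ∀ k ≤ 4, (SemidirectProduct.inl v : AGL23) ∈ derivedSeries AGL23 k := by
  intro k
  induction k with
  | zero => exact fun _ => Subgroup.mem_top _
  | succ k ih =>
    intro hk
    have hv : linAct (-1) v * v⁻¹ = v := by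
      have h3 : ∀ x : ZMod 3, -x + -x = x := by decide
      have hneg : linAct (-1) v = v⁻¹ := by
        show Multiplicative.ofAdd _ = Multiplicative.ofAdd (-v.toAdd)
        rw [Units.val_neg, Units.val_one, neg_mulVec, one_mulVec]
        rfl
      rw [hneg]
      exact Multiplicative.toAdd.injective (funext fun i => h3 (v.toAdd i))
    have h1 : (SemidirectProduct.inr (-1) : AGL23) ∈ derivedSeries AGL23 k :=
      derivedSeries_antitone _ (show k ≤ 3 by omega)
        (map_derivedSeries_le_derivedSeries _ 3
          (Subgroup.mem_map_of_mem _ neg_one_mem_derivedSeries))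
    rw [← hv, ← SemidirectProduct.commutator_inr_inl, derivedSeries_succ]
    exact Subgroup.commutator_mem_commutator h1 (ih (by omega))

/-- The translation by the vector `(1, 1)`. -/
def shift : AGL23 := SemidirectProduct.inl (Multiplicative.ofAdd 1)

theorem shift_mem : shift ∈ derivedSeries AGL23 4 := translation_mem_derivedSeries _ 4 le_rfl

theorem AGL23_data : SolvableGroupData AGL23 (4 + 1) 7 := by
  have h5 : derivedSeries AGL23 (4 + 1) = ⊥ := by
    have h := derivedSeries_add_le_map _ 4
      (derivedSeries_semidirect_le linAct derivedSeries_four_eq) 1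
    have hT : derivedSeries TransGrp 1 = ⊥ := by
      rw [derivedSeries_one, commutator_def, Subgroup.commutator_eq_bot_iff_le_centralizer]
      intro x _ y _
      exact mul_comm _ _
    rwa [hT, Subgroup.map_bot, le_bot_iff] at h
  refine ⟨Finite.of_equiv _ SemidirectProduct.equivProd.symm, ⟨_, h5⟩, h5, ?_, ?_⟩
  · intro h
    have := shift_mem
    rw [show 4 + 1 - 1 = 4 from rfl] at h
    rw [h, Subgroup.mem_bot, shift] at this
    replace this := SemidirectProduct.inl_injective (this.trans (map_one _).symm)
    exact absurd (congrFun (congrArg Multiplicative.toAdd this) 0) (by decide)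
  · rw [SemidirectProduct.card, card_TransGrp, card_GL23, ← ArithmeticFunction.cardFactors_apply,
      show 9 * 48 = 2 ^ 4 * 3 ^ 3 by norm_num,
      ArithmeticFunction.cardFactors_mul (by norm_num) (by norm_num),
      ArithmeticFunction.cardFactors_apply_prime_pow Nat.prime_two,
      ArithmeticFunction.cardFactors_apply_prime_pow Nat.prime_three]

theorem inl_smul_ne {v : TransGrp} (hv : v ≠ 1) :
    (SemidirectProduct.inl v : AGL23) • ((1 : AGL23) : AGL23 ⧸ AGL23.stab) ≠ (1 : AGL23) := by
  rw [MulAction.Quotient.smul_coe, Ne, eq_comm, QuotientGroup.eq]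
  rintro ⟨A, hA⟩
  apply hv
  simpa using (congrArg SemidirectProduct.left hA).symm

/-! ### The iterated wreath product -/

theorem exists_data (r : ℕ) : ∃ (G : Type) (inst : Group G),
    @SolvableGroupData G inst (5 * (r + 1)) (7 * (9 ^ (r + 1) - 1) / 8) := by
  induction r with
  | zero => exact ⟨AGL23, inferInstance, AGL23_data⟩
  | succ r ih =>
    obtain ⟨G, inst, hG⟩ := ih
    have : Finite (AGL23 ⧸ AGL23.stab) :=
      Nat.finite_of_card_ne_zero (by rw [card_AGL23_quotient]; norm_num)
    have h1 : shift • ((1 : AGL23) : AGL23 ⧸ AGL23.stab) ≠ (1 : AGL23) := inl_smul_ne (by decide)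
    have h2 : shift • shift • ((1 : AGL23) : AGL23 ⧸ AGL23.stab) ≠ (1 : AGL23) := by
      rw [smul_smul, shift, ← map_mul]
      exact inl_smul_ne (by decide)
    have h := wreath_data G AGL23 (AGL23 ⧸ AGL23.stab) (by omega) hG AGL23_data shift_mem h1 h2
    refine ⟨Wreath G AGL23 (AGL23 ⧸ AGL23.stab), inferInstance, ?_⟩
    rw [card_AGL23_quotient] at h
    -- the divisions by `8` are exact
    obtain ⟨k, hk⟩ : ∃ k, 9 ^ (r + 1) = 8 * k + 1 := by
      have : 9 ^ (r + 1) % 8 = 1 := by simp [Nat.pow_mod]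
      exact ⟨9 ^ (r + 1) / 8, by omega⟩
    have hn : 7 * (9 ^ (r + 1 + 1) - 1) / 8 = 9 * (7 * (9 ^ (r + 1) - 1) / 8) + 7 := by
      rw [pow_succ 9 (r + 1), hk]
      omega
    rw [hn]
    exact h

/-- For every `r ≥ 1` there is a finite solvable group of derived length exactly
`5r` and composition length `7(9^r - 1)/8` (the `r`-fold wreath power of the
primitive subgroup `GL₂(3) ⋉ C₃²` of `S₉`).  In particular, for every `d ≥ 1`
divisible by 5, the minimal composition length of a finite solvable group of
derived length `d` is less than `(7/8)·9^{d/5}`, i.e. some such group `G`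
satisfies `8·c(G) < 7·9^{d/5}`. -/
theorem exists_derivedLength_five_r :
    (∀ r : ℕ, 1 ≤ r → ∃ (G : Type) (inst : Group G),
      @SolvableGroupData G inst (5 * r) (7 * (9 ^ r - 1) / 8)) ∧
    (∀ d : ℕ, 1 ≤ d → 5 ∣ d → ∃ (G : Type) (inst : Group G) (n : ℕ),
      @SolvableGroupData G inst d n ∧ 8 * n < 7 * 9 ^ (d / 5)) := by
  have key : ∀ r : ℕ, 1 ≤ r → ∃ (G : Type) (inst : Group G),
      @SolvableGroupData G inst (5 * r) (7 * (9 ^ r - 1) / 8) := by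
    intro r hr
    obtain ⟨s, rfl⟩ := Nat.exists_eq_add_of_le' hr
    exact exists_data s
  refine ⟨key, ?_⟩
  rintro d hd ⟨r, rfl⟩
  obtain ⟨G, inst, h⟩ := key r (by omega)
  refine ⟨G, inst, _, h, ?_⟩
  rw [Nat.mul_div_cancel_left r (by norm_num)]
  have : 0 < 9 ^ r := by positivity
  omega
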